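/- arXiv:1902.03755 — 6 statements merged into one kernel-verified Lean document; each statement's English description precedes it below -/
import Mathlib

section
/- Let n, d, k be positive integers, X ∈ ℝ^{n×d}, and let α, β ∈ [1,∞] with β ≥ α. Then sup{ ‖XU‖_{2×β} : U ∈ ℝ^{d×k}, ‖U‖_{1×α} ≤ 1 } = ‖Xᵀ‖_{∞×2} = max_{1≤i≤d} ‖X(:,i)‖_2, and the supremum is attained. -/
open scoped ENNReal BigOperators
open Matrix

/-- The `ℓ_p` norm of a finitely-indexed real vector, `p ∈ [1,∞]`
(with the sup convention for `p = ∞`). -/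
noncomputable def lpNorm {ι : Type*} [Fintype ι] (p : ℝ≥0∞) (v : ι → ℝ) : ℝ :=
  if p = ∞ then ⨆ i, |v i| else (∑ i, |v i| ^ p.toReal) ^ (1 / p.toReal)

/-- The mixed norm `‖A‖_{p×q}`: the `ℓ_p` norm of the vector of `ℓ_q` norms of the rows. -/
noncomputable def mixedNorm {ι κ : Type*} [Fintype ι] [Fintype κ]
    (p q : ℝ≥0∞) (A : Matrix ι κ ℝ) : ℝ :=
  lpNorm p (fun i => lpNorm q (A i))

theorem lpN_eq {ι : Type*} [Fintype ι] (p : ℝ≥0∞) [hp : Fact (1 ≤ p)] (v : ι → ℝ) :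
    lpNorm p v = ‖WithLp.toLp p v‖ := by
  unfold lpNorm
  split_ifs with h
  · subst h
    rw [PiLp.norm_eq_ciSup]
    simp [Real.norm_eq_abs]
  · have h0 : 0 < p.toReal :=
      ENNReal.toReal_pos (ne_of_gt (lt_of_lt_of_le one_pos hp.out)) h
    rw [PiLp.norm_eq_sum h0]
    simp [Real.norm_eq_abs]

theorem lpN_nonneg {ι : Type*} [Fintype ι] (p : ℝ≥0∞) (hp : 1 ≤ p) (v : ι → ℝ) :
    0 ≤ lpNorm p v := by
  have : Fact (1 ≤ p) := ⟨hp⟩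
  rw [lpN_eq]; exact norm_nonneg _

theorem lpN_sum {ι κ : Type*} [Fintype ι] [Fintype κ] (p : ℝ≥0∞) (hp : 1 ≤ p)
    (c : κ → ℝ) (v : κ → ι → ℝ) :
    lpNorm p (fun i => ∑ j, c j * v j i) ≤ ∑ j, |c j| * lpNorm p (v j) := by
  have : Fact (1 ≤ p) := ⟨hp⟩
  simp only [lpN_eq]
  have : WithLp.toLp p (fun i => ∑ j, c j * v j i) = ∑ j, c j • WithLp.toLp p (v j) := by
    ext i
    simp
  rw [this]
  refine (norm_sum_le _ _).trans (le_of_eq ?_)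
  simp [norm_smul]

theorem lpN_apply_le {ι : Type*} [Fintype ι] (p : ℝ≥0∞) (hp : 1 ≤ p) (v : ι → ℝ) (i : ι) :
    |v i| ≤ lpNorm p v := by
  have : Fact (1 ≤ p) := ⟨hp⟩
  rw [lpN_eq]
  simpa [Real.norm_eq_abs] using PiLp.norm_apply_le (WithLp.toLp p v) i

theorem lpN_single {ι : Type*} [Fintype ι] [DecidableEq ι] (p : ℝ≥0∞) (hp : 1 ≤ p)
    (i : ι) (c : ℝ) : lpNorm p (Pi.single i c) = |c| := by
  have : Fact (1 ≤ p) := ⟨hp⟩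
  rw [lpN_eq]
  simp

theorem lpN_mono {ι : Type*} [Fintype ι] (v w : ι → ℝ) (h : ∀ i, |v i| ≤ |w i|) :
    lpNorm 2 v ≤ lpNorm 2 w := by
  simp only [lpNorm, ENNReal.ofNat_ne_top, if_false]
  have := fun i => h i
  apply Real.rpow_le_rpow
  · positivity
  · apply Finset.sum_le_sum
    intro i _
    exact Real.rpow_le_rpow (abs_nonneg _) (h i) (by simp)
  · simp

theorem lpN_antitone {ι : Type*} [Fintype ι] (p q : ℝ≥0∞) (hp : 1 ≤ p) (hpq : p ≤ q)
    (v : ι → ℝ) : lpNorm q v ≤ lpNorm p v := by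
  have hs := lpN_nonneg p hp v
  by_cases hq : q = ∞
  · subst hq
    conv_lhs => unfold lpNorm
    rw [if_pos rfl]
    exact Real.iSup_le (fun i => lpN_apply_le p hp v i) hs
  have hp' : p ≠ ∞ := ne_top_of_le_ne_top hq hpq
  have hp0 : 0 < p.toReal := ENNReal.toReal_pos (ne_of_gt (lt_of_lt_of_le one_pos hp)) hp'
  have hle : p.toReal ≤ q.toReal := ENNReal.toReal_mono hq hpq
  have hq0 : 0 < q.toReal := hp0.trans_le hle
  have key : lpNorm p v ^ p.toReal = ∑ i, |v i| ^ p.toReal := by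
    unfold lpNorm
    rw [if_neg hp', ← Real.rpow_mul (by positivity), one_div_mul_cancel hp0.ne', Real.rpow_one]
  have h2 : ∑ i, |v i| ^ q.toReal ≤ lpNorm p v ^ q.toReal := by
    have e : q.toReal = p.toReal + (q.toReal - p.toReal) := by ring
    have hd : 0 ≤ q.toReal - p.toReal := by linarith
    calc ∑ i, |v i| ^ q.toReal
        ≤ ∑ i, |v i| ^ p.toReal * lpNorm p v ^ (q.toReal - p.toReal) := by
          apply Finset.sum_le_sum
          intro i _
          conv_lhs => rw [e]
          rw [Real.rpow_add_of_nonneg (abs_nonneg _) hp0.le hd]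
          have := Real.rpow_le_rpow (abs_nonneg _) (lpN_apply_le p hp v i) hd
          gcongr
      _ = lpNorm p v ^ q.toReal := by
          rw [← Finset.sum_mul, ← key, ← Real.rpow_add_of_nonneg hs hp0.le hd, ← e]
  conv_lhs => unfold lpNorm
  rw [if_neg hq]
  calc _ ≤ (lpNorm p v ^ q.toReal) ^ (1 / q.toReal) :=
        Real.rpow_le_rpow (by positivity) h2 (by positivity)
    _ = lpNorm p v := by
        rw [← Real.rpow_mul hs, mul_one_div_cancel hq0.ne', Real.rpow_one]

/-- Proposition "th:lip-general": for `α, β ∈ [1,∞]` with `β ≥ α`,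
`sup { ‖XU‖_{2×β} : ‖U‖_{1×α} ≤ 1 } = ‖Xᵀ‖_{∞×2} = max_i ‖X(:,i)‖₂`, the sup being attained. -/
theorem subordinate_norm_one_alpha_to_two_beta
    (n d k : ℕ) (hn : 0 < n) (hd : 0 < d) (hk : 0 < k)
    (X : Matrix (Fin n) (Fin d) ℝ)
    (α β : ℝ≥0∞) (hα : 1 ≤ α) (hβ : 1 ≤ β) (hαβ : α ≤ β) :
    IsGreatest
      {r : ℝ | ∃ U : Matrix (Fin d) (Fin k) ℝ,
        mixedNorm 1 α U ≤ 1 ∧ r = mixedNorm 2 β (X * U)}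
      (mixedNorm ∞ 2 Xᵀ) ∧
    mixedNorm ∞ 2 Xᵀ = ⨆ i : Fin d, lpNorm 2 (fun l => X l i) := by
  have h12 : (1 : ℝ≥0∞) ≤ 2 := by norm_num
  have hsup : mixedNorm ∞ 2 Xᵀ = ⨆ i : Fin d, lpNorm 2 (fun l => X l i) := by
    unfold mixedNorm
    conv_lhs => unfold lpNorm
    rw [if_pos rfl]
    refine iSup_congr fun i => ?_
    exact abs_of_nonneg (lpN_nonneg 2 h12 _)
  refine ⟨?_, hsup⟩
  rw [hsup]
  have : Nonempty (Fin d) := ⟨⟨0, hd⟩⟩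
  constructor
  · obtain ⟨j, hj⟩ := exists_eq_ciSup_of_finite (f := fun i : Fin d => lpNorm 2 (fun l => X l i))
    refine ⟨fun i => Pi.single ⟨0, hk⟩ ((Pi.single j 1 : Fin d → ℝ) i), ?_, ?_⟩
    · unfold mixedNorm
      simp only [lpN_single α hα]
      have : (fun i => |(Pi.single j 1 : Fin d → ℝ) i|) = Pi.single j 1 := by
        ext i
        by_cases h : i = j
        · subst h; simp
        · simp [h]
      rw [this, lpN_single 1 le_rfl]
      simp
    · rw [← hj]
      unfold mixedNorm
      have : ∀ l, (X * (show Matrix (Fin d) (Fin k) ℝ from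
          fun i => Pi.single ⟨0, hk⟩ ((Pi.single j 1 : Fin d → ℝ) i))) l = Pi.single ⟨0, hk⟩ (X l j) := by
        intro l
        ext m
        rw [Matrix.mul_apply, Finset.sum_eq_single j]
        · by_cases h : m = ⟨0, hk⟩
          · subst h; simp
          · simp [h]
        · intro b _ hb
          simp [hb]
        · simp
      simp only [this, lpN_single β hβ]
      apply le_antisymm <;> exact lpN_mono _ _ (fun i => by simp)
  · rintro r ⟨U, hU, rfl⟩
    have hU' : ∑ j, lpNorm α (U j) ≤ 1 := by
      have : mixedNorm 1 α U = ∑ j, lpNorm α (U j) := by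
        unfold mixedNorm
        rw [lpNorm, if_neg ENNReal.one_ne_top]
        simp [abs_of_nonneg (lpN_nonneg α hα _)]
      linarith
    set M := ⨆ i : Fin d, lpNorm 2 (fun l => X l i) with hM
    have hMj : ∀ j, lpNorm 2 (fun l => X l j) ≤ M := fun j =>
      le_ciSup (f := fun i : Fin d => lpNorm 2 (fun l => X l i)) (Set.finite_range _).bddAbove j
    have hM0 : 0 ≤ M := (lpN_nonneg 2 h12 _).trans (hMj ⟨0, hd⟩)
    have hc := fun j => lpN_nonneg β hβ (U j)
    calc mixedNorm 2 β (X * U)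
        ≤ lpNorm 2 (fun l => ∑ j, lpNorm β (U j) * |X l j|) := by
          apply lpN_mono
          intro l
          rw [abs_of_nonneg (lpN_nonneg β hβ _)]
          refine le_trans ?_ (le_abs_self _)
          refine (lpN_sum β hβ (fun j => X l j) U).trans (le_of_eq ?_)
          exact Finset.sum_congr rfl fun j _ => mul_comm _ _
      _ ≤ ∑ j, |lpNorm β (U j)| * lpNorm 2 (fun l => |X l j|) :=
          lpN_sum 2 h12 (fun j => lpNorm β (U j)) (fun j l => |X l j|)
      _ ≤ ∑ j, lpNorm α (U j) * M := by
          apply Finset.sum_le_sum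
          intro j _
          rw [abs_of_nonneg (hc j)]
          exact mul_le_mul (lpN_antitone α β hα hαβ _)
            ((lpN_mono _ _ (fun i => by simp)).trans (hMj j))
            (lpN_nonneg 2 h12 _) (lpN_nonneg α hα _)
      _ ≤ M := by
          rw [← Finset.sum_mul]
          nlinarith
end

section
/- Let m ≥ 1, let X⁰ ∈ ℝ^m have strictly positive entries, let S ∈ ℝ^m, C₁ ∈ ℝ, C₂ > 0 and R > 0. Define M = Σ_{j=1}^m X⁰_j·exp(−S_j/C₂), ρ = min( M·exp(−(C₁+C₂)/C₂), R ), and X¹_i = ρ·X⁰_i·exp(−S_i/C₂)/M. Then X¹ is the unique minimizer over the set { X ∈ ℝ^m : X_i ≥ 0 for all i, Σ_i X_i ≤ R } of the function X ↦ C₁·Σ_i X_i + ⟨S, X⟩ + C₂·Σ_{i=1}^m X_i·log(X_i/X⁰_i), where the convention 0·log 0 = 0 is used. -/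
open scoped BigOperators

/-- Lemma "lemmaForU": the explicit entropic-proximal minimizer.
`X¹_i = ρ · X⁰_i · exp(−S_i/C₂) / M` is the unique minimizer of
`X ↦ C₁·Σ_i X_i + ⟨S, X⟩ + C₂·Σ_i X_i log(X_i/X⁰_i)` over
`{X : X_i ≥ 0, Σ_i X_i ≤ R}` (with the convention `0 · log 0 = 0`,
which is automatic here since `Real.log 0 = 0`). -/
theorem entropic_prox_unique_minimizer
    (m : ℕ) (hm : 1 ≤ m)
    (X0 : Fin m → ℝ) (hX0 : ∀ i, 0 < X0 i)
    (S : Fin m → ℝ) (C1 C2 R : ℝ) (hC2 : 0 < C2) (hR : 0 < R)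
    (M : ℝ) (hM : M = ∑ j, X0 j * Real.exp (-S j / C2))
    (ρ : ℝ) (hρ : ρ = min (M * Real.exp (-(C1 + C2) / C2)) R)
    (X1 : Fin m → ℝ) (hX1 : ∀ i, X1 i = ρ * (X0 i * Real.exp (-S i / C2)) / M) :
    ((∀ i, 0 ≤ X1 i) ∧ ∑ i, X1 i ≤ R) ∧
    (∀ X : Fin m → ℝ, (∀ i, 0 ≤ X i) → ∑ i, X i ≤ R → X ≠ X1 →
      C1 * (∑ i, X1 i) + (∑ i, S i * X1 i) + C2 * (∑ i, X1 i * Real.log (X1 i / X0 i))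
        < C1 * (∑ i, X i) + (∑ i, S i * X i) + C2 * (∑ i, X i * Real.log (X i / X0 i))) := by
  haveI : Nonempty (Fin m) := ⟨⟨0, hm⟩⟩
  have hMpos : 0 < M := by
    rw [hM]
    exact Finset.sum_pos (fun i _ => mul_pos (hX0 i) (Real.exp_pos _)) Finset.univ_nonempty
  have hρpos : 0 < ρ := by
    rw [hρ]
    exact lt_min (mul_pos hMpos (Real.exp_pos _)) hR
  have hX1pos : ∀ i, 0 < X1 i := fun i => by
    rw [hX1]
    exact div_pos (mul_pos hρpos (mul_pos (hX0 i) (Real.exp_pos _))) hMpos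
  have hsum : ∑ i, X1 i = ρ := by
    simp_rw [hX1]
    rw [← Finset.sum_div, ← Finset.mul_sum, ← hM]
    field_simp
  have hρR : ρ ≤ R := by rw [hρ]; exact min_le_right _ _
  refine ⟨⟨fun i => (hX1pos i).le, by rw [hsum]; exact hρR⟩, ?_⟩
  intro X hX hXR hne
  have hlog1 : ∀ i, C2 * Real.log (X1 i / X0 i) = C2 * Real.log (ρ / M) - S i := fun i => by
    have h : X1 i / X0 i = (ρ / M) * Real.exp (-S i / C2) := by
      rw [hX1]
      have := (hX0 i).ne'
      field_simp
    rw [h, Real.log_mul (div_pos hρpos hMpos).ne' (Real.exp_pos _).ne', Real.log_exp]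
    field_simp
    ring
  set L := Real.log (ρ / M) with hL
  have hK : 0 ≤ (C1 + C2 + C2 * L) * (∑ i, X i - ρ) := by
    have hexp : C2 * Real.log (Real.exp (-(C1 + C2) / C2)) = -(C1 + C2) := by
      rw [Real.log_exp]; field_simp
    rcases le_total (M * Real.exp (-(C1 + C2) / C2)) R with h | h
    · have h1 : ρ / M = Real.exp (-(C1 + C2) / C2) := by
        rw [hρ, min_eq_left h]; field_simp
      rw [← h1] at hexp
      have : C1 + C2 + C2 * L = 0 := by rw [hL, hexp]; ring
      rw [this, zero_mul]
    · have h1 : ρ = R := by rw [hρ, min_eq_right h]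
      have h2 : ρ / M ≤ Real.exp (-(C1 + C2) / C2) := by
        rw [div_le_iff₀ hMpos, h1, mul_comm]; exact h
      have h3 := mul_le_mul_of_nonneg_left (Real.log_le_log (div_pos hρpos hMpos) h2) hC2.le
      rw [hexp] at h3
      exact mul_nonneg_of_nonpos_of_nonpos (by linarith) (by linarith)
  have key : ∀ i, X i ≠ X1 i → C1 * X1 i + S i * X1 i + C2 * (X1 i * Real.log (X1 i / X0 i))
      + (C1 + C2 + C2 * L) * (X i - X1 i)
      < C1 * X i + S i * X i + C2 * (X i * Real.log (X i / X0 i)) := by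
    intro i hi
    have hl := hlog1 i
    have hy := hX1pos i
    have e1 : C2 * (X1 i * Real.log (X1 i / X0 i)) = X1 i * (C2 * L - S i) := by
      rw [← hl]; ring
    rw [e1]
    rcases (hX i).eq_or_lt with h0 | h0
    · rw [← h0]
      nlinarith [mul_pos hC2 hy]
    · have h1 : Real.log (X1 i / X i) < X1 i / X i - 1 :=
        Real.log_lt_sub_one_of_pos (div_pos hy h0) (by
          rw [Ne, div_eq_one_iff_eq h0.ne']; exact fun h => hi h.symm)
      have h2 : Real.log (X i / X0 i) = Real.log (X1 i / X0 i) - Real.log (X1 i / X i) := by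
        rw [Real.log_div h0.ne' (hX0 i).ne', Real.log_div hy.ne' (hX0 i).ne',
          Real.log_div hy.ne' h0.ne']
        ring
      have h3 : X i * Real.log (X1 i / X i) < X1 i - X i := by
        have := mul_lt_mul_of_pos_left h1 h0
        have e : X i * (X1 i / X i - 1) = X1 i - X i := by field_simp
        linarith
      have h4 := mul_lt_mul_of_pos_left h3 hC2
      have e2 : C2 * (X i * Real.log (X i / X0 i))
          = X i * (C2 * L - S i) - C2 * (X i * Real.log (X1 i / X i)) := by
        rw [h2, ← hl]; ring
      rw [e2]
      nlinarith
  obtain ⟨k, hk⟩ := Function.ne_iff.mp hne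
  have hlt := Finset.sum_lt_sum (s := Finset.univ)
    (f := fun i => C1 * X1 i + S i * X1 i + C2 * (X1 i * Real.log (X1 i / X0 i))
      + (C1 + C2 + C2 * L) * (X i - X1 i))
    (g := fun i => C1 * X i + S i * X i + C2 * (X i * Real.log (X i / X0 i)))
    (fun i _ => by
      by_cases h : X i = X1 i
      · simp [h]
      · exact (key i h).le) ⟨k, Finset.mem_univ k, key k hk⟩
  simp only [Finset.sum_add_distrib, ← Finset.mul_sum, Finset.sum_sub_distrib] at hlt
  rw [hsum] at hlt ⊢
  linarith
end

section
/- Let n, m, k be positive integers, X̂ ∈ ℝ^{n×m}, U ∈ ℝ^{m×k}, and V, Y ∈ (Δ_k)^{⊗n}. (i) For every probability vector p on [m] with positive entries, the partial-sampling estimate ξ_U(p) satisfies E[ ‖ξ_U(p)‖_{2×∞}² ] = Σ_{i=1}^m (1/p_i)·‖X̂(:,i)‖_2²·‖U(i,:)‖_∞², and if c_i := ‖X̂(:,i)‖_2·‖U(i,:)‖_∞ > 0 for all i, then this quantity is at least (Σ_{i=1}^m c_i)², with equality if and only if p = p* where p*_i = c_i / Σ_{ι} c_ι. (ii) Likewise,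 for every probability vector q on [n] with positive entries, E[ ‖η_{V,Y}(q)‖_{∞×∞}² ] = Σ_{j=1}^n (1/q_j)·‖X̂(j,:)‖_∞²·‖V(j,:) − Y(j,:)‖_∞², and if d_j := ‖X̂(j,:)‖_∞·‖V(j,:) − Y(j,:)‖_∞ > 0 for all j, then this quantity is at least (Σ_{j=1}^n d_j)², with equality if and only if q = q* where q*_j = d_j / Σ_{ȷ} d_ȷ. -/
open scoped ENNReal BigOperators
open Matrix

/-- The partial-sampling primal estimate `ξ_U(p) = X̂ (e_i e_iᵀ / p_i) U`,
as a (deterministic) matrix-valued function of the drawn index `i`. -/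
noncomputable def xiPart {n m k : ℕ} (Xh : Matrix (Fin n) (Fin m) ℝ)
    (U : Matrix (Fin m) (Fin k) ℝ) (p : Fin m → ℝ) (i : Fin m) :
    Matrix (Fin n) (Fin k) ℝ :=
  Matrix.of fun r c => Xh r i * U i c / p i

/-- The partial-sampling dual estimate `η_{V,Y}(q) = X̂ᵀ (e_j e_jᵀ / q_j)(V − Y)`,
as a (deterministic) matrix-valued function of the drawn index `j`. -/
noncomputable def etaPart {n m k : ℕ} (Xh : Matrix (Fin n) (Fin m) ℝ)
    (V Y : Matrix (Fin n) (Fin k) ℝ) (q : Fin n → ℝ) (j : Fin n) :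
    Matrix (Fin m) (Fin k) ℝ :=
  Matrix.of fun r c => Xh j r * (V j c - Y j c) / q j

theorem lpn_abs {ι : Type*} [Fintype ι] (P : ℝ≥0∞) (v : ι → ℝ) :
    lpNorm P (fun i => |v i|) = lpNorm P v := by
  simp [lpNorm]

theorem lpn_nonneg {ι : Type*} [Fintype ι] (P : ℝ≥0∞) (v : ι → ℝ) : 0 ≤ lpNorm P v := by
  unfold lpNorm
  split_ifs
  · exact Real.iSup_nonneg fun i => abs_nonneg _
  · positivity

theorem lpn_smul {ι : Type*} [Fintype ι] (P : ℝ≥0∞) (hP : P ≠ 0) (a : ℝ) (v : ι → ℝ) :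
    lpNorm P (fun i => a * v i) = |a| * lpNorm P v := by
  unfold lpNorm
  split_ifs with h
  · simp only [abs_mul]
    rw [Real.mul_iSup_of_nonneg (abs_nonneg a)]
  · have h0 : P.toReal ≠ 0 := by simp [ENNReal.toReal_eq_zero_iff, hP, h]
    have : ∀ i, |a * v i| ^ P.toReal = |a| ^ P.toReal * |v i| ^ P.toReal := fun i => by
      rw [abs_mul, Real.mul_rpow (abs_nonneg _) (abs_nonneg _)]
    simp only [this]
    rw [← Finset.mul_sum, Real.mul_rpow (by positivity) (by positivity),
      ← Real.rpow_mul (abs_nonneg _), mul_one_div_cancel h0, Real.rpow_one]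

theorem mixed_rank_one {ι κ : Type*} [Fintype ι] [Fintype κ] (P : ℝ≥0∞) (hP : P ≠ 0)
    (x : ι → ℝ) (u : κ → ℝ) (t : ℝ) (ht : 0 < t) :
    mixedNorm P ∞ (Matrix.of fun r c => x r * u c / t) = lpNorm P x * lpNorm ∞ u / t := by
  have h1 : ∀ r, lpNorm ∞ ((Matrix.of fun r c => x r * u c / t) r)
      = (lpNorm ∞ u / t) * |x r| := fun r => by
    have : ((Matrix.of fun r c => x r * u c / t) r) = fun c => (x r / t) * u c := by
      funext c; simp only [Matrix.of_apply]; ring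
    rw [this, lpn_smul _ (by simp), abs_div, abs_of_pos ht]; ring
  unfold mixedNorm
  simp only [h1]
  rw [lpn_smul _ hP, lpn_abs, abs_of_nonneg (div_nonneg (lpn_nonneg _ _) ht.le)]
  ring

theorem opt_aux {ι : Type*} [Fintype ι] [Nonempty ι] (c p : ι → ℝ) (hp : ∀ i, 0 < p i)
    (hs : ∑ i, p i = 1) (hc : ∀ i, 0 < c i) :
    (∑ i, c i) ^ 2 ≤ ∑ i, p i * (c i / p i) ^ 2 ∧
    (∑ i, p i * (c i / p i) ^ 2 = (∑ i, c i) ^ 2 ↔ ∀ i, p i = c i / ∑ i', c i') := by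
  set S := ∑ i, c i with hS
  have hSpos : 0 < S := Finset.sum_pos (fun i _ => hc i) Finset.univ_nonempty
  have key : ∑ i, p i * (c i / p i) ^ 2 = S ^ 2 + ∑ i, (c i - S * p i) ^ 2 / p i := by
    have : ∀ i, (c i - S * p i) ^ 2 / p i
        = p i * (c i / p i) ^ 2 - 2 * S * c i + S ^ 2 * p i := fun i => by
      have := (hp i).ne'
      field_simp
      ring
    simp only [this, Finset.sum_add_distrib, Finset.sum_sub_distrib, ← Finset.mul_sum, hs, ← hS]
    ring
  have hn : ∀ i ∈ Finset.univ, 0 ≤ (c i - S * p i) ^ 2 / p i := fun i _ =>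
    div_nonneg (sq_nonneg _) (hp i).le
  rw [key]
  refine ⟨by linarith [Finset.sum_nonneg hn], ?_⟩
  rw [add_eq_left, Finset.sum_eq_zero_iff_of_nonneg hn]
  refine ⟨fun h i => ?_, fun h i _ => ?_⟩
  · have h1 := h i (Finset.mem_univ i)
    rw [div_eq_zero_iff, or_iff_left (hp i).ne', sq_eq_zero_iff] at h1
    rw [eq_div_iff hSpos.ne']
    linarith
  · have h1 := h i
    rw [eq_div_iff hSpos.ne'] at h1
    have : c i - S * p i = 0 := by linarith
    simp [this]

/-- Second moments of the partial-sampling estimates in the `2×∞` (resp. `∞×∞`)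
mixed norms, and optimality of the sampling distributions `p*`, `q*`. -/
theorem partial_sampling_second_moment_optimal_distributions
    (n m k : ℕ) (hn : 0 < n) (hm : 0 < m) (hk : 0 < k)
    (Xh : Matrix (Fin n) (Fin m) ℝ)
    (U : Matrix (Fin m) (Fin k) ℝ)
    (V Y : Matrix (Fin n) (Fin k) ℝ)
    (hV : ∀ j, V j ∈ stdSimplex ℝ (Fin k)) (hY : ∀ j, Y j ∈ stdSimplex ℝ (Fin k)) :
    -- (i) primal estimate
    (∀ p : Fin m → ℝ, (∀ i, 0 < p i) → (∑ i, p i) = 1 →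
      ((∑ i, p i * (mixedNorm 2 ∞ (xiPart Xh U p i)) ^ 2)
          = ∑ i, (1 / p i) * (lpNorm 2 (fun r => Xh r i)) ^ 2 * (lpNorm ∞ (U i)) ^ 2) ∧
      ((∀ i, 0 < lpNorm 2 (fun r => Xh r i) * lpNorm ∞ (U i)) →
        ((∑ i, lpNorm 2 (fun r => Xh r i) * lpNorm ∞ (U i)) ^ 2
            ≤ ∑ i, p i * (mixedNorm 2 ∞ (xiPart Xh U p i)) ^ 2 ∧
         ((∑ i, p i * (mixedNorm 2 ∞ (xiPart Xh U p i)) ^ 2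
              = (∑ i, lpNorm 2 (fun r => Xh r i) * lpNorm ∞ (U i)) ^ 2)
            ↔ (∀ i, p i = lpNorm 2 (fun r => Xh r i) * lpNorm ∞ (U i) /
                  ∑ i', lpNorm 2 (fun r => Xh r i') * lpNorm ∞ (U i')))))) ∧
    -- (ii) dual estimate
    (∀ q : Fin n → ℝ, (∀ j, 0 < q j) → (∑ j, q j) = 1 →
      ((∑ j, q j * (mixedNorm ∞ ∞ (etaPart Xh V Y q j)) ^ 2)
          = ∑ j, (1 / q j) * (lpNorm ∞ (Xh j)) ^ 2 * (lpNorm ∞ (fun l => V j l - Y j l)) ^ 2) ∧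
      ((∀ j, 0 < lpNorm ∞ (Xh j) * lpNorm ∞ (fun l => V j l - Y j l)) →
        ((∑ j, lpNorm ∞ (Xh j) * lpNorm ∞ (fun l => V j l - Y j l)) ^ 2
            ≤ ∑ j, q j * (mixedNorm ∞ ∞ (etaPart Xh V Y q j)) ^ 2 ∧
         ((∑ j, q j * (mixedNorm ∞ ∞ (etaPart Xh V Y q j)) ^ 2
              = (∑ j, lpNorm ∞ (Xh j) * lpNorm ∞ (fun l => V j l - Y j l)) ^ 2)
            ↔ (∀ j, q j = lpNorm ∞ (Xh j) * lpNorm ∞ (fun l => V j l - Y j l) /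
                  ∑ j', lpNorm ∞ (Xh j') * lpNorm ∞ (fun l => V j' l - Y j' l)))))) := by
  haveI : Nonempty (Fin n) := ⟨⟨0, hn⟩⟩
  haveI : Nonempty (Fin m) := ⟨⟨0, hm⟩⟩
  refine ⟨fun p hp hs => ?_, fun q hq hs => ?_⟩
  · have h : ∀ i, mixedNorm 2 ∞ (xiPart Xh U p i)
        = lpNorm 2 (fun r => Xh r i) * lpNorm ∞ (U i) / p i := fun i =>
      mixed_rank_one 2 (by simp) (fun r => Xh r i) (U i) (p i) (hp i)
    simp only [h]
    refine ⟨Finset.sum_congr rfl fun i _ => ?_, fun hc => opt_aux _ p hp hs hc⟩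
    have := (hp i).ne'
    field_simp
  · have h : ∀ j, mixedNorm ∞ ∞ (etaPart Xh V Y q j)
        = lpNorm ∞ (Xh j) * lpNorm ∞ (fun l => V j l - Y j l) / q j := fun j =>
      mixed_rank_one ∞ (by simp) (Xh j) (fun l => V j l - Y j l) (q j) (hq j)
    simp only [h]
    refine ⟨Finset.sum_congr rfl fun i _ => ?_, fun hc => opt_aux _ q hq hs hc⟩
    have := (hq i).ne'
    field_simp
end

section
/- Let n, m, k be positive integers, X̂ ∈ ℝ^{n×m}, R > 0, and let p_U¹, p_U², p_V¹, p_V² ∈ [1,∞] with Hölder conjugates q_U¹, q_U², q_V¹, q_V² respectively. Define L = (1/n) sup{ ‖X̂U‖_{q_V¹×q_V²} : U ∈ ℝ^{m×k}, ‖U‖_{p_U¹×p_U²} ≤ 1 }. (i) For any U ∈ ℝ^{m×k} with c_i := ‖X̂(:,i)‖_{q_V¹}·‖U(i,:)‖_{q_V²} > 0 for all i, the distribution p*_i = c_i/Σ_ι c_ι minimizes E[ ‖ξ_U(p)‖_{q_V¹×q_V²}² ] = Σ_i (1/p_i) c_i² over probability vectors p with positive entries, with minimal value (Σ_i c_i)².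 (ii) If moreover p_U² ≤ q_V², then (1/n²) sup{ E[ ‖X̂U − ξ_U(p*(U))‖_{q_V¹×q_V²}² ] : ‖U‖_{p_U¹×p_U²} ≤ R, all c_i(U) > 0 } ≤ 2 R² L² + (2/n²) R² ‖X̂ᵀ‖_{q_U¹×q_V¹}². -/
open scoped ENNReal BigOperators
open Matrix

theorem lpNorm_eq_top {ι : Type*} [Fintype ι] (v : ι → ℝ) : lpNorm ∞ v = ⨆ i, |v i| := by
  simp [lpNorm]

theorem lpNorm_eq_fin {ι : Type*} [Fintype ι] {p : ℝ≥0∞} (hp : p ≠ ∞) (v : ι → ℝ) :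
    lpNorm p v = (∑ i, |v i| ^ p.toReal) ^ (1 / p.toReal) := by
  simp [lpNorm, hp]

theorem lpNorm_eq_norm {ι : Type*} [Fintype ι] {p : ℝ≥0∞} [Fact (1 ≤ p)] (v : ι → ℝ) :
    lpNorm p v = ‖WithLp.toLp p v‖ := by
  have h1 : 1 ≤ p := Fact.out
  by_cases hp : p = ∞
  · subst hp
    rw [lpNorm_eq_top, PiLp.norm_eq_ciSup]; rfl
  · rw [lpNorm_eq_fin hp, PiLp.norm_eq_sum (ENNReal.toReal_pos (by positivity) hp)]; rfl

theorem lpNorm_nonneg {ι : Type*} [Fintype ι] {p : ℝ≥0∞} (hp : 1 ≤ p) (v : ι → ℝ) :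
    0 ≤ lpNorm p v := by
  have : Fact (1 ≤ p) := ⟨hp⟩
  rw [lpNorm_eq_norm]; positivity

theorem lpNorm_add_le {ι : Type*} [Fintype ι] {p : ℝ≥0∞} (hp : 1 ≤ p) (v w : ι → ℝ) :
    lpNorm p (v + w) ≤ lpNorm p v + lpNorm p w := by
  have : Fact (1 ≤ p) := ⟨hp⟩
  simp only [lpNorm_eq_norm, WithLp.toLp_add]; exact norm_add_le _ _

theorem lpNorm_smul {ι : Type*} [Fintype ι] {p : ℝ≥0∞} (hp : 1 ≤ p) (a : ℝ) (v : ι → ℝ) :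
    lpNorm p (a • v) = |a| * lpNorm p v := by
  have : Fact (1 ≤ p) := ⟨hp⟩
  simp only [lpNorm_eq_norm, WithLp.toLp_smul]; rw [norm_smul]; rfl

theorem abs_le_lpNorm {ι : Type*} [Fintype ι] {p : ℝ≥0∞} (hp : 1 ≤ p) (v : ι → ℝ) (i : ι) :
    |v i| ≤ lpNorm p v := by
  have : Fact (1 ≤ p) := ⟨hp⟩
  rw [lpNorm_eq_norm]; exact PiLp.norm_apply_le (WithLp.toLp p v) i

theorem lpNorm_mono {ι : Type*} [Fintype ι] {p : ℝ≥0∞} (hp : 1 ≤ p) {v w : ι → ℝ}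
    (h : ∀ i, |v i| ≤ |w i|) : lpNorm p v ≤ lpNorm p w := by
  by_cases ht : p = ∞
  · subst ht
    rw [lpNorm_eq_top]
    exact Real.iSup_le (fun i => (h i).trans (abs_le_lpNorm hp w i)) (lpNorm_nonneg hp w)
  · rw [lpNorm_eq_fin ht, lpNorm_eq_fin ht]
    refine Real.rpow_le_rpow (by positivity) (Finset.sum_le_sum fun i _ => ?_) (by positivity)
    exact Real.rpow_le_rpow (abs_nonneg _) (h i) (by positivity)

theorem lpNorm_anti {ι : Type*} [Fintype ι] {p q : ℝ≥0∞} (hp : 1 ≤ p) (hpq : p ≤ q)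
    (v : ι → ℝ) : lpNorm q v ≤ lpNorm p v := by
  have h0 := lpNorm_nonneg hp v
  by_cases hq : q = ∞
  · subst hq
    rw [lpNorm_eq_top]
    exact Real.iSup_le (fun i => abs_le_lpNorm hp v i) h0
  have hpt : p ≠ ∞ := fun h => hq (top_le_iff.1 (h ▸ hpq))
  have hp0 : 0 < p.toReal := ENNReal.toReal_pos (by positivity) hpt
  have hpq' : p.toReal ≤ q.toReal := ENNReal.toReal_mono hq hpq
  have hq0 : 0 < q.toReal := hp0.trans_le hpq'
  have hs : ∑ i, |v i| ^ p.toReal = lpNorm p v ^ p.toReal := by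
    rw [lpNorm_eq_fin hpt, ← Real.rpow_mul (by positivity), one_div_mul_cancel hp0.ne',
      Real.rpow_one]
  rw [lpNorm_eq_fin hq]
  have key : ∑ i, |v i| ^ q.toReal ≤ lpNorm p v ^ q.toReal := by
    have e : ∀ x : ℝ, 0 ≤ x → x ^ q.toReal = x ^ p.toReal * x ^ (q.toReal - p.toReal) := by
      intro x hx
      rw [← Real.rpow_add_of_nonneg hx hp0.le (by linarith)]; congr 1; ring
    rw [e _ h0, ← hs, Finset.sum_mul]
    refine Finset.sum_le_sum fun i _ => ?_
    rw [e _ (abs_nonneg _)]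
    have := abs_le_lpNorm hp v i
    gcongr
  calc _ ≤ (lpNorm p v ^ q.toReal) ^ (1 / q.toReal) := by gcongr
    _ = _ := by rw [← Real.rpow_mul h0, mul_one_div_cancel hq0.ne', Real.rpow_one]

theorem lpNorm_one_eq {ι : Type*} [Fintype ι] (v : ι → ℝ) : lpNorm 1 v = ∑ i, |v i| := by
  simp [lpNorm]

theorem lpNorm_holder {ι : Type*} [Fintype ι] {p q : ℝ≥0∞} (hp : 1 ≤ p) (hq : 1 ≤ q)
    (h : 1 / p + 1 / q = 1) (v w : ι → ℝ) :
    ∑ i, |v i| * |w i| ≤ lpNorm p v * lpNorm q w := by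
  by_cases hpt : p = ∞
  · subst hpt
    have : q = 1 := by simpa using h
    subst this
    rw [lpNorm_one_eq, Finset.mul_sum]
    gcongr with i
    exact abs_le_lpNorm hp v i
  by_cases hqt : q = ∞
  · subst hqt
    have : p = 1 := by simpa using h
    subst this
    rw [lpNorm_one_eq, Finset.sum_mul]
    gcongr with i
    exact abs_le_lpNorm hq w i
  have hp0 : 0 < p.toReal := ENNReal.toReal_pos (by positivity) hpt
  have hq0 : 0 < q.toReal := ENNReal.toReal_pos (by positivity) hqt
  have hr : p.toReal⁻¹ + q.toReal⁻¹ = 1 := by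
    have := congrArg ENNReal.toReal h
    rw [ENNReal.toReal_add (by simp; positivity) (by simp; positivity)] at this
    simpa using this
  have hc : p.toReal.HolderConjugate q.toReal := ⟨by simpa using hr, hp0, hq0⟩
  have := Real.inner_le_Lp_mul_Lq Finset.univ (fun i => |v i|) (fun i => |w i|) hc
  rw [lpNorm_eq_fin hpt, lpNorm_eq_fin hqt]
  simpa using this

theorem conj_one_le {p q : ℝ≥0∞} (h : 1 / p + 1 / q = 1) : 1 ≤ q := by
  have : 1 / q ≤ 1 := le_add_self.trans h.le
  simpa using this

theorem mixedNorm_nonneg {ι κ : Type*} [Fintype ι] [Fintype κ] {p q : ℝ≥0∞} (hp : 1 ≤ p)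
    (A : Matrix ι κ ℝ) : 0 ≤ mixedNorm p q A := lpNorm_nonneg hp _

theorem mixedNorm_add_le {ι κ : Type*} [Fintype ι] [Fintype κ] {p q : ℝ≥0∞} (hp : 1 ≤ p)
    (hq : 1 ≤ q) (A B : Matrix ι κ ℝ) :
    mixedNorm p q (A + B) ≤ mixedNorm p q A + mixedNorm p q B := by
  refine le_trans (lpNorm_mono hp fun i => ?_) (lpNorm_add_le hp _ _)
  have hA := lpNorm_nonneg hq (A i)
  have hB := lpNorm_nonneg hq (B i)
  rw [abs_of_nonneg (lpNorm_nonneg hq _)]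
  exact (lpNorm_add_le hq (A i) (B i)).trans (le_abs_self _)

theorem mixedNorm_smul {ι κ : Type*} [Fintype ι] [Fintype κ] {p q : ℝ≥0∞} (hp : 1 ≤ p)
    (hq : 1 ≤ q) (a : ℝ) (A : Matrix ι κ ℝ) :
    mixedNorm p q (a • A) = |a| * mixedNorm p q A := by
  unfold mixedNorm
  have h1 : (fun i => lpNorm q ((a • A) i)) = |a| • (fun i => lpNorm q (A i)) := by
    ext i
    exact lpNorm_smul hq a (A i)
  rw [h1, lpNorm_smul hp, abs_abs]

theorem mixedNorm_outer {ι κ : Type*} [Fintype ι] [Fintype κ] {p q : ℝ≥0∞} (hp : 1 ≤ p)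
    (hq : 1 ≤ q) (x : ι → ℝ) (u : κ → ℝ) :
    mixedNorm p q (Matrix.of fun r c => x r * u c) = lpNorm p x * lpNorm q u := by
  unfold mixedNorm
  have h1 : (fun i => lpNorm q ((Matrix.of fun r c => x r * u c) i))
      = lpNorm q u • (fun i => |x i|) := by
    ext i
    have := lpNorm_smul hq (x i) u
    simp only [Pi.smul_apply, smul_eq_mul]
    rw [mul_comm, ← this]; rfl
  rw [h1, lpNorm_smul hp, abs_of_nonneg (lpNorm_nonneg hq u), mul_comm]
  congr 1
  exact le_antisymm (lpNorm_mono hp (by simp)) (lpNorm_mono hp (by simp))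

theorem mixedNorm_sum_le {ι κ σ : Type*} [Fintype ι] [Fintype κ] {p q : ℝ≥0∞}
    (hp : 1 ≤ p) (hq : 1 ≤ q) (s : Finset σ) (A : σ → Matrix ι κ ℝ) :
    mixedNorm p q (∑ i ∈ s, A i) ≤ ∑ i ∈ s, mixedNorm p q (A i) := by
  classical
  induction s using Finset.induction_on with
  | empty =>
    have := mixedNorm_smul hp hq 0 (0 : Matrix ι κ ℝ)
    simp at this; simp [this]
  | insert a s ha ih =>
    rw [Finset.sum_insert ha, Finset.sum_insert ha]
    exact (mixedNorm_add_le hp hq _ _).trans (by gcongr)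

theorem mixedNorm_mul_le {n m k : ℕ} {p q : ℝ≥0∞} (hp : 1 ≤ p) (hq : 1 ≤ q)
    (X : Matrix (Fin n) (Fin m) ℝ) (U : Matrix (Fin m) (Fin k) ℝ) :
    mixedNorm p q (X * U) ≤ ∑ i, lpNorm p (fun r => X r i) * lpNorm q (U i) := by
  have : X * U = ∑ i, Matrix.of fun r c => X r i * U i c := by
    ext r c
    simp [Matrix.mul_apply, Matrix.sum_apply]
  rw [this]
  refine (mixedNorm_sum_le hp hq _ _).trans (le_of_eq ?_)
  exact Finset.sum_congr rfl fun i _ => mixedNorm_outer hp hq (fun r => X r i) (U i)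

theorem sum_c_le {n m k : ℕ} {a b p q s : ℝ≥0∞} (hp : 1 ≤ p) (hq : 1 ≤ q) (ha : 1 ≤ a)
    (hb : 1 ≤ b) (hs : 1 ≤ s) (hab : 1 / a + 1 / b = 1) (hsq : s ≤ q)
    (X : Matrix (Fin n) (Fin m) ℝ) (U : Matrix (Fin m) (Fin k) ℝ) :
    ∑ i, lpNorm p (fun r => X r i) * lpNorm q (U i) ≤ mixedNorm a s U * mixedNorm b p Xᵀ := by
  refine le_trans ?_ (lpNorm_holder ha hb hab _ _)
  refine Finset.sum_le_sum fun i _ => ?_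
  rw [abs_of_nonneg (lpNorm_nonneg hs _), abs_of_nonneg (lpNorm_nonneg hp _), mul_comm]
  exact mul_le_mul (lpNorm_anti hs hsq _) le_rfl (lpNorm_nonneg hp _) (lpNorm_nonneg hs _)

theorem mixedNorm_xi {n m k : ℕ} {a b : ℝ≥0∞} (ha : 1 ≤ a) (hb : 1 ≤ b)
    (X : Matrix (Fin n) (Fin m) ℝ) (U : Matrix (Fin m) (Fin k) ℝ) (p : Fin m → ℝ) (i : Fin m)
    (hp : 0 < p i) :
    mixedNorm a b (xiPart X U p i) = lpNorm a (fun r => X r i) * lpNorm b (U i) / p i := by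
  have : xiPart X U p i = (p i)⁻¹ • Matrix.of fun r c => X r i * U i c := by
    ext r c; simp [xiPart]; ring
  rw [this, mixedNorm_smul ha hb, mixedNorm_outer ha hb (fun r => X r i) (U i),
    abs_of_pos (inv_pos.2 hp)]
  ring

/-- Extended Proposition "th:variance-partial-general", primal part: for general
mixed norms, the optimal sampling distribution and the variance proxy bound
(assuming `p_U² ≤ q_V²`). -/
theorem partial_sampling_primal_general_norms
    (n m k : ℕ) (hn : 0 < n) (hm : 0 < m) (hk : 0 < k)
    (Xh : Matrix (Fin n) (Fin m) ℝ) (R : ℝ) (hR : 0 < R)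
    (pU₁ pU₂ pV₁ pV₂ qU₁ qU₂ qV₁ qV₂ : ℝ≥0∞)
    (hpU₁ : 1 ≤ pU₁) (hpU₂ : 1 ≤ pU₂) (hpV₁ : 1 ≤ pV₁) (hpV₂ : 1 ≤ pV₂)
    (hcU₁ : 1 / pU₁ + 1 / qU₁ = 1) (hcU₂ : 1 / pU₂ + 1 / qU₂ = 1)
    (hcV₁ : 1 / pV₁ + 1 / qV₁ = 1) (hcV₂ : 1 / pV₂ + 1 / qV₂ = 1)
    (L : ℝ)
    (hL : L = sSup {r : ℝ | ∃ U : Matrix (Fin m) (Fin k) ℝ,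
        mixedNorm pU₁ pU₂ U ≤ 1 ∧ r = mixedNorm qV₁ qV₂ (Xh * U)} / n) :
    -- (i) optimal distribution and second moment
    (∀ U : Matrix (Fin m) (Fin k) ℝ,
      (∀ i, 0 < lpNorm qV₁ (fun r => Xh r i) * lpNorm qV₂ (U i)) →
      (∀ p : Fin m → ℝ, (∀ i, 0 < p i) → (∑ i, p i) = 1 →
        ((∑ i, p i * (mixedNorm qV₁ qV₂ (xiPart Xh U p i)) ^ 2)
            = ∑ i, (1 / p i) * (lpNorm qV₁ (fun r => Xh r i) * lpNorm qV₂ (U i)) ^ 2) ∧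
        (∑ i, lpNorm qV₁ (fun r => Xh r i) * lpNorm qV₂ (U i)) ^ 2
          ≤ ∑ i, p i * (mixedNorm qV₁ qV₂ (xiPart Xh U p i)) ^ 2) ∧
      (∑ i, (lpNorm qV₁ (fun r => Xh r i) * lpNorm qV₂ (U i) /
              ∑ i', lpNorm qV₁ (fun r => Xh r i') * lpNorm qV₂ (U i')) *
          (mixedNorm qV₁ qV₂ (xiPart Xh U
            (fun i' => lpNorm qV₁ (fun r => Xh r i') * lpNorm qV₂ (U i') /
              ∑ i'', lpNorm qV₁ (fun r => Xh r i'') * lpNorm qV₂ (U i'')) i)) ^ 2)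
        = (∑ i, lpNorm qV₁ (fun r => Xh r i) * lpNorm qV₂ (U i)) ^ 2) ∧
    -- (ii) variance proxy bound under `p_U² ≤ q_V²`
    (pU₂ ≤ qV₂ →
      ∀ U : Matrix (Fin m) (Fin k) ℝ, mixedNorm pU₁ pU₂ U ≤ R →
      (∀ i, 0 < lpNorm qV₁ (fun r => Xh r i) * lpNorm qV₂ (U i)) →
      (1 / (n : ℝ) ^ 2) *
        (∑ i, (lpNorm qV₁ (fun r => Xh r i) * lpNorm qV₂ (U i) /
                ∑ i', lpNorm qV₁ (fun r => Xh r i') * lpNorm qV₂ (U i')) *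
          (mixedNorm qV₁ qV₂ (Xh * U - xiPart Xh U
            (fun i' => lpNorm qV₁ (fun r => Xh r i') * lpNorm qV₂ (U i') /
              ∑ i'', lpNorm qV₁ (fun r => Xh r i'') * lpNorm qV₂ (U i'')) i)) ^ 2)
        ≤ 2 * R ^ 2 * L ^ 2 + (2 / (n : ℝ) ^ 2) * R ^ 2 * (mixedNorm qU₁ qV₁ Xhᵀ) ^ 2) := by
  have h1 := conj_one_le hcV₁
  have h2 := conj_one_le hcV₂
  have h3 := conj_one_le hcU₁
  have hopt : ∀ U : Matrix (Fin m) (Fin k) ℝ,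
      (∀ i, 0 < lpNorm qV₁ (fun r => Xh r i) * lpNorm qV₂ (U i)) →
      (∑ i, (lpNorm qV₁ (fun r => Xh r i) * lpNorm qV₂ (U i) /
              ∑ i', lpNorm qV₁ (fun r => Xh r i') * lpNorm qV₂ (U i')) *
          (mixedNorm qV₁ qV₂ (xiPart Xh U
            (fun i' => lpNorm qV₁ (fun r => Xh r i') * lpNorm qV₂ (U i') /
              ∑ i'', lpNorm qV₁ (fun r => Xh r i'') * lpNorm qV₂ (U i'')) i)) ^ 2)
        = (∑ i, lpNorm qV₁ (fun r => Xh r i) * lpNorm qV₂ (U i)) ^ 2 := by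
    intro U hU
    have hS : 0 < ∑ i, lpNorm qV₁ (fun r => Xh r i) * lpNorm qV₂ (U i) :=
      Finset.sum_pos (fun i _ => hU i) ⟨⟨0, hm⟩, Finset.mem_univ _⟩
    rw [sq (∑ i, lpNorm qV₁ (fun r => Xh r i) * lpNorm qV₂ (U i))]
    conv_rhs => rw [Finset.sum_mul]
    refine Finset.sum_congr rfl fun i _ => ?_
    rw [mixedNorm_xi h1 h2 _ _ _ _ (div_pos (hU i) hS)]
    have hc := hU i
    generalize lpNorm qV₁ (fun r => Xh r i) * lpNorm qV₂ (U i) = c at *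
    generalize (∑ i, lpNorm qV₁ (fun r => Xh r i) * lpNorm qV₂ (U i)) = S at *
    field_simp
  refine ⟨fun U hU => ⟨fun p hp hp1 => ?_, hopt U hU⟩, fun hle U hUR hU => ?_⟩
  · have e : (∑ i, p i * (mixedNorm qV₁ qV₂ (xiPart Xh U p i)) ^ 2)
            = ∑ i, (1 / p i) * (lpNorm qV₁ (fun r => Xh r i) * lpNorm qV₂ (U i)) ^ 2 := by
      refine Finset.sum_congr rfl fun i _ => ?_
      rw [mixedNorm_xi h1 h2 _ _ _ _ (hp i)]
      have := hp i
      field_simp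
    refine ⟨e, ?_⟩
    rw [e]
    have := Finset.sum_sq_le_sum_mul_sum_of_sq_eq_mul Finset.univ
      (r := fun i => lpNorm qV₁ (fun r => Xh r i) * lpNorm qV₂ (U i)) (f := p)
      (g := fun i => (1 / p i) * (lpNorm qV₁ (fun r => Xh r i) * lpNorm qV₂ (U i)) ^ 2)
      (fun i _ => (hp i).le) (fun i _ => by have := hp i; positivity)
      (fun i _ => by have := hp i; field_simp)
    rwa [hp1, one_mul] at this
  · have hS : 0 < ∑ i, lpNorm qV₁ (fun r => Xh r i) * lpNorm qV₂ (U i) :=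
      Finset.sum_pos (fun i _ => hU i) ⟨⟨0, hm⟩, Finset.mem_univ _⟩
    have hM := mixedNorm_nonneg (q := qV₁) h3 Xhᵀ
    have hSle : ∑ i, lpNorm qV₁ (fun r => Xh r i) * lpNorm qV₂ (U i)
        ≤ R * mixedNorm qU₁ qV₁ Xhᵀ :=
      (sum_c_le h1 h2 hpU₁ h3 hpU₂ hcU₁ hle Xh U).trans (by gcongr)
    have hn' : (0 : ℝ) < n := by exact_mod_cast hn
    have hXU : mixedNorm qV₁ qV₂ (Xh * U) ≤ R * (n * L) := by
      have hb : mixedNorm qV₁ qV₂ (Xh * (R⁻¹ • U)) ≤ n * L := by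
        rw [hL, mul_div_cancel₀ _ hn'.ne']
        refine le_csSup ⟨mixedNorm qU₁ qV₁ Xhᵀ, ?_⟩ ⟨R⁻¹ • U, ?_, rfl⟩
        · rintro r ⟨W, hW, rfl⟩
          refine (mixedNorm_mul_le h1 h2 Xh W).trans
            ((sum_c_le h1 h2 hpU₁ h3 hpU₂ hcU₁ hle Xh W).trans ?_)
          exact mul_le_of_le_one_left hM hW
        · rw [mixedNorm_smul hpU₁ hpU₂, abs_of_pos (inv_pos.2 hR), inv_mul_le_iff₀ hR]
          linarith
      rw [Matrix.mul_smul, mixedNorm_smul h1 h2, abs_of_pos (inv_pos.2 hR),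
        inv_mul_le_iff₀ hR] at hb
      exact hb
    have hXU0 := mixedNorm_nonneg (q := qV₂) h1 (Xh * U)
    have hmain : (∑ i, (lpNorm qV₁ (fun r => Xh r i) * lpNorm qV₂ (U i) /
                ∑ i', lpNorm qV₁ (fun r => Xh r i') * lpNorm qV₂ (U i')) *
          (mixedNorm qV₁ qV₂ (Xh * U - xiPart Xh U
            (fun i' => lpNorm qV₁ (fun r => Xh r i') * lpNorm qV₂ (U i') /
              ∑ i'', lpNorm qV₁ (fun r => Xh r i'') * lpNorm qV₂ (U i'')) i)) ^ 2)
        ≤ 2 * mixedNorm qV₁ qV₂ (Xh * U) ^ 2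
          + 2 * (∑ i, lpNorm qV₁ (fun r => Xh r i) * lpNorm qV₂ (U i)) ^ 2 := by
      rw [← hopt U hU]
      have hsum1 : ∑ i, (lpNorm qV₁ (fun r => Xh r i) * lpNorm qV₂ (U i) /
                ∑ i', lpNorm qV₁ (fun r => Xh r i') * lpNorm qV₂ (U i')) = 1 := by
        rw [← Finset.sum_div, div_self hS.ne']
      rw [← one_mul (2 * mixedNorm qV₁ qV₂ (Xh * U) ^ 2)]
      conv_rhs => rw [← hsum1]
      rw [Finset.sum_mul, Finset.mul_sum, ← Finset.sum_add_distrib]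
      refine Finset.sum_le_sum fun i _ => ?_
      have hpi := div_pos (hU i) hS
      generalize xiPart Xh U (fun i' => lpNorm qV₁ (fun r => Xh r i') * lpNorm qV₂ (U i') /
              ∑ i'', lpNorm qV₁ (fun r => Xh r i'') * lpNorm qV₂ (U i'')) i = Z
      generalize (lpNorm qV₁ (fun r => Xh r i) * lpNorm qV₂ (U i) /
                ∑ i', lpNorm qV₁ (fun r => Xh r i') * lpNorm qV₂ (U i')) = w at *
      have ht : mixedNorm qV₁ qV₂ (Xh * U - Z)
          ≤ mixedNorm qV₁ qV₂ (Xh * U) + mixedNorm qV₁ qV₂ Z := by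
        have := mixedNorm_add_le h1 h2 (Xh * U) ((-1 : ℝ) • Z)
        rw [mixedNorm_smul h1 h2] at this
        simpa [sub_eq_add_neg] using this
      have h0 := mixedNorm_nonneg (q := qV₂) h1 (Xh * U - Z)
      have hq : mixedNorm qV₁ qV₂ (Xh * U - Z) ^ 2
          ≤ 2 * mixedNorm qV₁ qV₂ (Xh * U) ^ 2 + 2 * mixedNorm qV₁ qV₂ Z ^ 2 := by
        have := pow_le_pow_left₀ h0 ht 2
        nlinarith [sq_nonneg (mixedNorm qV₁ qV₂ (Xh * U) - mixedNorm qV₁ qV₂ Z)]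
      have := mul_le_mul_of_nonneg_left hq hpi.le
      linarith
    have hA := pow_le_pow_left₀ hXU0 hXU 2
    have hB := pow_le_pow_left₀ hS.le hSle 2
    calc _ ≤ (1 / (n : ℝ) ^ 2) * (2 * (R * (n * L)) ^ 2
          + 2 * (R * mixedNorm qU₁ qV₁ Xhᵀ) ^ 2) := by
          refine mul_le_mul_of_nonneg_left (hmain.trans ?_) (by positivity)
          linarith
      _ = _ := by field_simp
end

section
/- Correctness of the lazy primal (multiplicative) update. Let d, k ≥ 1, n ≥ 1, γ > 0, λ ≥ 0, R > 0, L = log(2dk). Let U ∈ ℝ^{2d×k} have strictly positive entries, let l* ∈ [k], η̄ ∈ ℝ^{2d}, and let η ∈ ℝ^{2d×k} be the matrix whose l*-th column is η̄ and all other columns are zero. Define the multiplicative update U⁺_{il} = U_{il} · e^{−2γRL·η_{il}/n} · ν with M = Σ_{i,l} U_{il} · e^{−2γRL·η_{il}/n} and ν = min{ e^{−2γRLλ}, R/M }. Suppose Ũ ∈ ℝ^{2d×k}, α ∈ ℝ^{2d}, π ∈ ℝ^{2d} satisfy Ũ(i,:)·α_i = U(i,:) and π_i = Σ_{l=1}^k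 U_{il} for every i. Define q_i = e^{−2γRL·η̄_i/n}, μ_i = π_i − α_i·Ũ_{i,l*}·(1 − q_i), M' = Σ_i μ_i, ν' = min{ e^{−2γRLλ}, R/M' }, and the lazily updated quantities: Ũ⁺ equal to Ũ except Ũ⁺_{i,l*} = Ũ_{i,l*}·q_i, α⁺_i = ν'·α_i, and π⁺_i = ν'·μ_i. Then M' = M (hence ν' = ν), Ũ⁺(i,:)·α⁺_i = U⁺(i,:) for every i, and π⁺_i = Σ_{l=1}^k U⁺_{il} for every i. -/
open scoped BigOperators

/-- Correctness of the lazy primal (multiplicative) update in the sublinear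
multiclass ℓ₁-SVM algorithm: if `Ũ(i,:)·α_i = U(i,:)` and `π_i = Σ_l U_{il}`,
then after the lazy update one has `M' = M` (hence `ν' = ν`),
`Ũ⁺(i,:)·α⁺_i = U⁺(i,:)`, and `π⁺_i = Σ_l U⁺_{il}`. -/
theorem lazy_primal_update_correct
    (d k n : ℕ) (hd : 0 < d) (hk : 0 < k) (hn : 0 < n)
    (γ lam R : ℝ) (hγ : 0 < γ) (hlam : 0 ≤ lam) (hR : 0 < R)
    (L : ℝ) (hL : L = Real.log (2 * d * k))
    (U : Matrix (Fin (2 * d)) (Fin k) ℝ) (hU : ∀ i l, 0 < U i l)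
    (lstar : Fin k) (ηb : Fin (2 * d) → ℝ)
    (η : Matrix (Fin (2 * d)) (Fin k) ℝ)
    (hη : ∀ i l, η i l = if l = lstar then ηb i else 0)
    (M : ℝ) (hM : M = ∑ i, ∑ l, U i l * Real.exp (-(2 * γ * R * L * η i l) / n))
    (ν : ℝ) (hν : ν = min (Real.exp (-(2 * γ * R * L * lam))) (R / M))
    (Uplus : Matrix (Fin (2 * d)) (Fin k) ℝ)
    (hUplus : ∀ i l, Uplus i l = U i l * Real.exp (-(2 * γ * R * L * η i l) / n) * ν)
    (Ut : Matrix (Fin (2 * d)) (Fin k) ℝ) (α π : Fin (2 * d) → ℝ)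
    (hUt : ∀ i l, Ut i l * α i = U i l)
    (hπ : ∀ i, π i = ∑ l, U i l)
    (q : Fin (2 * d) → ℝ) (hq : ∀ i, q i = Real.exp (-(2 * γ * R * L * ηb i) / n))
    (μ : Fin (2 * d) → ℝ) (hμ : ∀ i, μ i = π i - α i * Ut i lstar * (1 - q i))
    (M' : ℝ) (hM' : M' = ∑ i, μ i)
    (ν' : ℝ) (hν' : ν' = min (Real.exp (-(2 * γ * R * L * lam))) (R / M'))
    (Utp : Matrix (Fin (2 * d)) (Fin k) ℝ)
    (hUtp : ∀ i l, Utp i l = if l = lstar then Ut i l * q i else Ut i l)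
    (αp : Fin (2 * d) → ℝ) (hαp : ∀ i, αp i = ν' * α i)
    (πp : Fin (2 * d) → ℝ) (hπp : ∀ i, πp i = ν' * μ i) :
    M' = M ∧ (∀ i l, Utp i l * αp i = Uplus i l) ∧ (∀ i, πp i = ∑ l, Uplus i l) := by
  have he : ∀ i l, Real.exp (-(2 * γ * R * L * η i l) / n) = if l = lstar then q i else 1 := by
    intro i l
    rw [hη, hq]
    split_ifs <;> simp
  have hrow : ∀ i, μ i = ∑ l, U i l * Real.exp (-(2 * γ * R * L * η i l) / n) := by
    intro i
    have h1 : ∀ l, U i l * Real.exp (-(2 * γ * R * L * η i l) / n)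
        = U i l - (if l = lstar then U i l * (1 - q i) else 0) := by
      intro l
      rw [he]
      split_ifs <;> ring
    simp only [h1, Finset.sum_sub_distrib, Finset.sum_ite_eq', Finset.mem_univ, if_true]
    rw [hμ, hπ, ← hUt i lstar]
    ring
  have hMM : M' = M := by
    rw [hM', hM]
    exact Finset.sum_congr rfl fun i _ => hrow i
  have hnn : ν' = ν := by rw [hν', hν, hMM]
  refine ⟨hMM, fun i l => ?_, fun i => ?_⟩
  · rw [hUtp, hαp, hUplus, he, hnn, ← hUt i l]
    split_ifs <;> ring
  · simp only [hUplus]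
    rw [hπp, hnn, hrow, ← Finset.sum_mul, mul_comm]
end

section
/- Correctness of the lazy dual update for the multiclass hinge loss. Let n ≥ 1, k ≥ 2, γ > 0. Let V ∈ ℝ^{n×k} have strictly positive entries with each row in Δ_k, let y ∈ [k]^n, and let Y ∈ ℝ^{n×k} have rows Y(j,:) = e_{y_j}ᵀ. Let l* ∈ [k] and ξ̄ ∈ ℝ^n, and let ξ ∈ ℝ^{n×k} be the matrix whose l*-th column is ξ̄ and all other columns are zero. Define χ_j = Σ_{m=1}^k V_{jm} · exp( 2γ·log(k)·(ξ_{jm} − Y_{jm}) ) and V⁺_{jl} = V_{jl} · exp( 2γ·log(k)·(ξ_{jl} − Y_{jl}) ) / χ_j. Then, with ω_j = e^{2γ·log(k)·ξ̄_j}, ε_j = e^{−2γ·log(k)·Y_{j,l*}} and θ = e^{−2γ·log(k)}: (i) χ_j = 1 − V_{j,l*}·(1 − ω_j ε_j) − 𝟙[l* ≠ y_j]·V_{j,y_j}·(1 − θ) for every j; (ii) every row of V⁺ lies in Δ_k with strictly positive entries, and ‖V⁺(j,:) − Y(j,:)‖_1 = 2 − 2·V⁺_{j,y_j} for every j. -/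
open scoped BigOperators

/-- Correctness of the lazy dual update for the multiclass hinge loss:
the normalizer `χ_j` of the entropic mirror-descent dual step (with a gradient
estimate `ξ` supported on a single column `l*`) has the closed form
`χ_j = 1 − V_{j,l*}(1 − ω_j ε_j) − 𝟙[l* ≠ y_j]·V_{j,y_j}(1 − θ)`;
moreover every row of the updated matrix `V⁺` lies in the probability simplex with
strictly positive entries, and `‖V⁺(j,:) − Y(j,:)‖₁ = 2 − 2·V⁺_{j,y_j}`. -/
theorem lazy_dual_update_correct
    (n k : ℕ) (hn : 0 < n) (hk : 2 ≤ k)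
    (γ : ℝ) (hγ : 0 < γ)
    (V : Matrix (Fin n) (Fin k) ℝ)
    (hVpos : ∀ j l, 0 < V j l) (hVrow : ∀ j, V j ∈ stdSimplex ℝ (Fin k))
    (y : Fin n → Fin k)
    (Y : Matrix (Fin n) (Fin k) ℝ) (hY : ∀ j l, Y j l = if l = y j then 1 else 0)
    (lstar : Fin k) (ξb : Fin n → ℝ)
    (ξ : Matrix (Fin n) (Fin k) ℝ)
    (hξ : ∀ j l, ξ j l = if l = lstar then ξb j else 0)
    (χ : Fin n → ℝ)
    (hχ : ∀ j, χ j = ∑ m, V j m * Real.exp (2 * γ * Real.log k * (ξ j m - Y j m)))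
    (Vplus : Matrix (Fin n) (Fin k) ℝ)
    (hVplus : ∀ j l, Vplus j l = V j l * Real.exp (2 * γ * Real.log k * (ξ j l - Y j l)) / χ j)
    (ω : Fin n → ℝ) (hω : ∀ j, ω j = Real.exp (2 * γ * Real.log k * ξb j))
    (ε : Fin n → ℝ) (hε : ∀ j, ε j = Real.exp (-(2 * γ * Real.log k * Y j lstar)))
    (θ : ℝ) (hθ : θ = Real.exp (-(2 * γ * Real.log k))) :
    (∀ j, χ j = 1 - V j lstar * (1 - ω j * ε j)
        - (if lstar ≠ y j then 1 else 0) * (V j (y j) * (1 - θ))) ∧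
    (∀ j, Vplus j ∈ stdSimplex ℝ (Fin k)) ∧
    (∀ j l, 0 < Vplus j l) ∧
    (∀ j, (∑ l, |Vplus j l - Y j l|) = 2 - 2 * Vplus j (y j)) := by
  have hχpos : ∀ j, 0 < χ j := by
    intro j
    rw [hχ]
    exact Finset.sum_pos (fun m _ => mul_pos (hVpos j m) (Real.exp_pos _)) ⟨lstar, Finset.mem_univ _⟩
  have hpos : ∀ j l, 0 < Vplus j l := by
    intro j l
    rw [hVplus]
    exact div_pos (mul_pos (hVpos j l) (Real.exp_pos _)) (hχpos j)
  have hsum : ∀ j, ∑ l, Vplus j l = 1 := by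
    intro j
    simp only [hVplus]
    rw [← Finset.sum_div, ← hχ, div_self (hχpos j).ne']
  refine ⟨?_, fun j => ⟨fun l => (hpos j l).le, hsum j⟩, hpos, ?_⟩
  · intro j
    have key : ∀ m, V j m * Real.exp (2 * γ * Real.log k * (ξ j m - Y j m))
        = V j m - (if m = lstar then V j lstar * (1 - ω j * ε j) else 0)
          - (if m = y j then (if lstar ≠ y j then 1 else 0) * (V j (y j) * (1 - θ)) else 0) := by
      intro m
      by_cases h1 : m = lstar
      · subst h1
        have he : Real.exp (2 * γ * Real.log k * (ξ j m - Y j m)) = ω j * ε j := by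
          rw [hω, hε, ← Real.exp_add, hξ, if_pos rfl]
          congr 1
          ring
        rw [he, if_pos rfl]
        by_cases h2 : m = y j
        · simp [h2]
          ring
        · simp [h2]
          ring
      · by_cases h2 : m = y j
        · have h3 : lstar ≠ y j := fun h => h1 (h2.trans h.symm)
          have he : Real.exp (2 * γ * Real.log k * (ξ j m - Y j m)) = θ := by
            rw [hθ, hξ, hY, if_neg h1, if_pos h2]
            congr 1
            ring
          rw [he, if_neg h1, if_pos h2, if_pos h3, h2]
          ring
        · rw [hξ, hY, if_neg h1, if_neg h2, if_neg h1, if_neg h2]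
          simp
    rw [hχ, Finset.sum_congr rfl (fun m _ => key m), Finset.sum_sub_distrib,
      Finset.sum_sub_distrib, (hVrow j).2, Finset.sum_ite_eq' , Finset.sum_ite_eq']
    simp only [Finset.mem_univ, if_true]
  · intro j
    have key : ∀ l, |Vplus j l - Y j l|
        = Vplus j l + (if l = y j then 1 - 2 * Vplus j (y j) else 0) := by
      intro l
      have hle : Vplus j l ≤ 1 := by
        rw [← hsum j]
        exact Finset.single_le_sum (fun i _ => (hpos j i).le) (Finset.mem_univ l)
      rw [hY]
      by_cases h : l = y j
      · rw [if_pos h, if_pos h, abs_of_nonpos (by linarith), h]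
        ring
      · rw [if_neg h, if_neg h, sub_zero, add_zero, abs_of_pos (hpos j l)]
    rw [Finset.sum_congr rfl (fun l _ => key l), Finset.sum_add_distrib, hsum,
      Finset.sum_ite_eq']
    simp only [Finset.mem_univ, if_true]
    ring
end
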